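/- Let n ≥ 1, let x_k = −cos(kπ/n) be the Chebyshev points of the second kind, let θ ∈ ℝ^{n+1}, and define the binned rounded nodes x̃_k as follows: if x_k < −1/2 then x̃_k := −1 + (x_k + 1)(1 + θ_k); if |x_k| ≤ 1/2 then x̃_k := x_k·(1 + θ_k); if x_k > 1/2 then x̃_k := 1 + (x_k − 1)(1 + θ_k). Then for every k ∈ {0, …, n}, Σ_{j≠k} |r_{jk}(x, x̃)| ≤ ‖θ‖_∞·(3.2 + 2.3·n + 4.3·n·log(n + 1)), where ‖θ‖_∞ = max_k |θ_k| and log is the natural logarithm. -/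

import Mathlib

/-- Relative error in the node differences `r_{jk}(x, x̃)`. -/
noncomputable def rjk {n : ℕ} (x xt : Fin (n + 1) → ℝ) (j k : Fin (n + 1)) : ℝ :=
  (xt k - xt j) / (x k - x j) - 1

/-!
Let `d t = min |t| (1 - |t|)` and `M = ‖θ‖_∞`. Rounding moves `x_k` by at most `M * d (x_k)`, and
`d` is 1-Lipschitz, so `|r_{jk}| ≤ M * (d (x_k) + d (x_j)) / |x_k - x_j|` is at most
`M * (1 + 2 * d (x_k) / |x_k - x_j|)`.

At `x_k = -cos a` one has `√3 * d (x_k) ≤ √(1 - x_k ^ 2) = sin a`, while the sum-to-product formula,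
concavity of `sin` on `[0, π]` and Jordan's inequality give `sin a * |k - j| / n ≤ |x_k - x_j|`.
Hence the quotient `d (x_k) / |x_k - x_j|` is at most `n / (√3 * |k - j|)`, and summing over `j`
produces two harmonic numbers, each at most `1 + log n`.
-/

open Real Polynomial.Chebyshev

/-- The distance from `t ∈ [-1, 1]` to the nearest of the bin centres `-1`, `0`, `1`. -/
noncomputable def binDist (t : ℝ) : ℝ := min |t| (1 - |t|)

/-- The binned rounding of `t ∈ [-1, 1]`: the offset of `t` from the centre of its bin (`-1`, `0` or
`1`) is perturbed by the relative error `τ`. -/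
noncomputable def binRound (t τ : ℝ) : ℝ :=
  if t < -(1 / 2) then -1 + (t + 1) * (1 + τ)
  else if |t| ≤ 1 / 2 then t * (1 + τ)
  else 1 + (t - 1) * (1 + τ)

lemma binDist_neg (t : ℝ) : binDist (-t) = binDist t := by
  simp only [binDist, abs_neg]

lemma binDist_nonneg {t : ℝ} (ht : |t| ≤ 1) : 0 ≤ binDist t :=
  le_min (abs_nonneg t) (sub_nonneg.2 ht)

lemma lipschitzWith_binDist : LipschitzWith 1 binDist := by
  have h_abs : LipschitzWith 1 fun t : ℝ => |t| := lipschitzWith_one_norm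
  have h_min : LipschitzWith (max 1 (0 + 1)) binDist :=
    h_abs.min ((LipschitzWith.const (1 : ℝ)).sub h_abs)
  rwa [zero_add, max_self] at h_min

lemma sqrt_three_mul_binDist_le {t : ℝ} (ht : |t| ≤ 1) : √3 * binDist t ≤ √(1 - t ^ 2) := by
  have h_sq : 3 * binDist t ^ 2 ≤ 1 - t ^ 2 := by
    rw [binDist, ← sq_abs t]
    rcases le_total |t| (1 / 2) with h | h
    · rw [min_eq_left (by linarith)]
      nlinarith [abs_nonneg t]
    · rw [min_eq_right (by linarith)]
      nlinarith
  refine le_sqrt_of_sq_le ?_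
  rwa [mul_pow, sq_sqrt (by norm_num)]

lemma abs_binRound_sub {t : ℝ} (ht : |t| ≤ 1) (τ : ℝ) :
    |binRound t τ - t| = |τ| * binDist t := by
  rw [← abs_of_nonneg (binDist_nonneg ht), ← abs_mul, binDist, binRound]
  split_ifs with h_left h_mid
  · rw [abs_of_neg (by linarith : t < 0), min_eq_right (by linarith)]
    ring_nf
  · rw [min_eq_left (by linarith), abs_mul τ |t|, abs_abs, ← abs_mul]
    ring_nf
  · have h_right : 1 / 2 < t := by
      by_contra! h
      exact h_mid (abs_le.2 ⟨not_lt.1 h_left, h⟩)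
    rw [abs_of_pos (by linarith : 0 < t), min_eq_right (by linarith), ← abs_neg]
    ring_nf

section Perturbation

variable {n : ℕ} {x xt : Fin (n + 1) → ℝ} {j k : Fin (n + 1)}

lemma rjk_eq_div (hjk : x k ≠ x j) :
    rjk x xt j k = ((xt k - x k) - (xt j - x j)) / (x k - x j) := by
  rw [rjk, div_sub_one (sub_ne_zero.2 hjk), sub_sub_sub_comm]

lemma abs_rjk_le_of_lipschitzWith {d : ℝ → ℝ} {M : ℝ} (hd : LipschitzWith 1 d) (hM : 0 ≤ M)
    (hxt : ∀ i, |xt i - x i| ≤ M * d (x i)) (hjk : x k ≠ x j) :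
    |rjk x xt j k| ≤ M * (1 + 2 * (d (x k) / |x k - x j|)) := by
  have h_gap : 0 < |x k - x j| := abs_pos.2 (sub_ne_zero.2 hjk)
  have h_lip : d (x j) ≤ d (x k) + |x k - x j| := by
    simpa [Real.dist_eq, abs_sub_comm] using hd.le_add_mul (x j) (x k)
  rw [rjk_eq_div hjk, abs_div, div_le_iff₀ h_gap]
  calc |xt k - x k - (xt j - x j)|
      ≤ |xt k - x k| + |xt j - x j| := abs_sub _ _
    _ ≤ M * d (x k) + M * (d (x k) + |x k - x j|) := by
        grw [hxt k, hxt j, h_lip]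
    _ = M * (1 + 2 * (d (x k) / |x k - x j|)) * |x k - x j| := by
        field_simp
        ring

end Perturbation

lemma sin_mul_abs_sub_div_pi_le_abs_cos_sub_cos {a b : ℝ} (ha : a ∈ Set.Icc 0 π)
    (hb : b ∈ Set.Icc 0 π) : sin a * (|a - b| / π) ≤ |cos a - cos b| := by
  have h_concave : sin a / 2 ≤ |sin ((a + b) / 2)| := by
    have h_mid := strictConcaveOn_sin_Icc.concaveOn.2 ha hb
      (by norm_num : (0 : ℝ) ≤ 1 / 2) (by norm_num : (0 : ℝ) ≤ 1 / 2) (by norm_num)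
    simp only [smul_eq_mul] at h_mid
    rw [show (a + b) / 2 = 1 / 2 * a + 1 / 2 * b by ring]
    exact le_trans (by linarith [sin_nonneg_of_mem_Icc hb]) (le_abs_self _)
  have h_jordan : |a - b| / π ≤ |sin ((a - b) / 2)| := by
    have h_range : |(a - b) / 2| ≤ π / 2 :=
      abs_le.2 ⟨by linarith [ha.1, hb.2], by linarith [ha.2, hb.1]⟩
    calc |a - b| / π = 2 / π * |(a - b) / 2| := by rw [abs_div, abs_two]; ring
      _ ≤ |sin ((a - b) / 2)| := mul_abs_le_abs_sin h_range
  calc sin a * (|a - b| / π) = 2 * (sin a / 2) * (|a - b| / π) := by ring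
    _ ≤ 2 * |sin ((a + b) / 2)| * |sin ((a - b) / 2)| := by gcongr
    _ = |cos a - cos b| := by rw [cos_sub_cos, abs_mul, abs_mul, abs_neg, abs_two]

section Nodes

variable {n j k : ℕ}

lemma mul_pi_div_mem_Icc (hk : k ≤ n) : (k * π / n : ℝ) ∈ Set.Icc 0 π := by
  refine ⟨by positivity, div_le_of_le_mul₀ (by positivity) pi_pos.le ?_⟩
  rw [mul_comm]
  gcongr

lemma abs_node_le_one (n k : ℕ) : |node n k| ≤ 1 :=
  abs_le.2 node_mem_Icc

lemma node_ne_node (hk : k ≤ n) (hj : j ≤ n) (hkj : k ≠ j) : node n k ≠ node n j :=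
  (strictAntiOn_node n).injOn.ne (by simpa [Nat.lt_succ_iff] using hk)
    (by simpa [Nat.lt_succ_iff] using hj) hkj

lemma sin_mul_abs_sub_div_le_abs_node_sub_node (hk : k ≤ n) (hj : j ≤ n) :
    sin (k * π / n) * (|(k : ℝ) - j| / n) ≤ |node n k - node n j| := by
  have h_angle : |(k * π / n : ℝ) - j * π / n| / π = |(k : ℝ) - j| / n := by
    rw [← sub_div, ← sub_mul, abs_div, abs_mul, abs_of_pos pi_pos, Nat.abs_cast]
    field_simp
  rw [← h_angle]
  exact sin_mul_abs_sub_div_pi_le_abs_cos_sub_cos (mul_pi_div_mem_Icc hk) (mul_pi_div_mem_Icc hj)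

lemma sqrt_three_mul_binDist_node_le (hk : k ≤ n) :
    √3 * binDist (node n k) ≤ sin (k * π / n) := by
  obtain ⟨h_lower, h_upper⟩ := mul_pi_div_mem_Icc hk
  rw [sin_eq_sqrt_one_sub_cos_sq h_lower h_upper]
  exact sqrt_three_mul_binDist_le (abs_node_le_one n k)

lemma binDist_node_div_le (hk : k ≤ n) (hj : j ≤ n) (hkj : k ≠ j) :
    binDist (node n k) / |node n k - node n j| ≤ n / √3 * |(k : ℝ) - j|⁻¹ := by
  have h_index : 0 < |(k : ℝ) - j| := abs_pos.2 (sub_ne_zero.2 (mod_cast hkj))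
  have h_gap : 0 < |node n k - node n j| := abs_pos.2 (sub_ne_zero.2 (node_ne_node hk hj hkj))
  have hn : (0 : ℝ) < n := mod_cast (by lia : 0 < n)
  rw [div_le_iff₀ h_gap]
  calc binDist (node n k)
      = n / √3 * |(k : ℝ) - j|⁻¹ * (√3 * binDist (node n k) * (|(k : ℝ) - j| / n)) := by
        field_simp
    _ ≤ n / √3 * |(k : ℝ) - j|⁻¹ * |node n k - node n j| := by
        grw [sqrt_three_mul_binDist_node_le hk, sin_mul_abs_sub_div_le_abs_node_sub_node hk hj]

end Nodes

section Harmonic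

lemma harmonic_mono : Monotone harmonic :=
  monotone_nat_of_le_succ fun n => by
    rw [harmonic_succ]
    exact le_add_of_nonneg_right (by positivity)

lemma harmonic_add_harmonic_sub_le {n k : ℕ} (hk : k ≤ n) :
    (harmonic k + harmonic (n - k) : ℝ) ≤ 2 * (1 + log n) := by
  have h_left : (harmonic k : ℝ) ≤ harmonic n := mod_cast harmonic_mono hk
  have h_right : (harmonic (n - k) : ℝ) ≤ harmonic n := mod_cast harmonic_mono (n.sub_le k)
  linarith [harmonic_le_one_add_log n]

/-- The term `j = a` contributes `0⁻¹ = 0`. -/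
lemma sum_range_inv_abs_sub (a b : ℕ) :
    ∑ j ∈ Finset.range (a + 1 + b), |(a : ℝ) - j|⁻¹ = harmonic a + harmonic b := by
  have h_below : ∑ j ∈ Finset.range a, |(a : ℝ) - j|⁻¹ = harmonic a := by
    rw [← Finset.sum_range_reflect, harmonic]
    push_cast
    refine Finset.sum_congr rfl fun j hj => ?_
    have h_sub : ((a - 1 - j : ℕ) : ℝ) = a - (j + 1) := by
      rw [Nat.sub_sub, add_comm, Nat.cast_sub (Finset.mem_range.1 hj)]
      push_cast
      ring
    rw [h_sub, sub_sub_cancel, abs_of_pos (by positivity)]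
  have h_above : ∑ j ∈ Finset.range b, |(a : ℝ) - (a + 1 + j : ℕ)|⁻¹ = harmonic b := by
    rw [harmonic]
    push_cast
    refine Finset.sum_congr rfl fun j _ => ?_
    rw [abs_sub_comm, add_assoc, add_sub_cancel_left, abs_of_pos (by positivity), add_comm]
  rw [Finset.sum_range_add, Finset.sum_range_succ, h_below, h_above, sub_self, abs_zero, inv_zero,
    add_zero]

lemma sum_erase_inv_abs_sub {n : ℕ} (k : Fin (n + 1)) :
    ∑ j ∈ Finset.univ.erase k, |(k : ℝ) - (j : ℕ)|⁻¹ = harmonic k + harmonic (n - k) := by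
  rw [Finset.sum_erase _ (by simp),
    Fin.sum_univ_eq_sum_range (fun j => |(k : ℝ) - (j : ℕ)|⁻¹) (n + 1), ← sum_range_inv_abs_sub]
  congr 2
  lia

end Harmonic

lemma sum_abs_rjk_node_le {n : ℕ} {xt : Fin (n + 1) → ℝ} {M : ℝ} (hM : 0 ≤ M)
    (hxt : ∀ i, |xt i - -node n i| ≤ M * binDist (-node n i)) (k : Fin (n + 1)) :
    ∑ j ∈ Finset.univ.erase k, |rjk (fun i => -node n i) xt j k| ≤
      M * (n + 2 * (n / √3) * (harmonic k + harmonic (n - k))) := by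
  have h_term : ∀ j ∈ Finset.univ.erase k, |rjk (fun i => -node n i) xt j k| ≤
      M * (1 + 2 * (n / √3 * |(k : ℝ) - (j : ℕ)|⁻¹)) := by
    intro j hj
    have hkj : (k : ℕ) ≠ j := Fin.val_ne_of_ne (Finset.ne_of_mem_erase hj).symm
    have h_nodes : -node n k ≠ -node n j := neg_injective.ne (node_ne_node k.is_le j.is_le hkj)
    grw [abs_rjk_le_of_lipschitzWith lipschitzWith_binDist hM hxt h_nodes, binDist_neg,
      neg_sub_neg, abs_sub_comm, binDist_node_div_le k.is_le j.is_le hkj]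
  calc ∑ j ∈ Finset.univ.erase k, |rjk (fun i => -node n i) xt j k|
      ≤ ∑ j ∈ Finset.univ.erase k, M * (1 + 2 * (n / √3 * |(k : ℝ) - (j : ℕ)|⁻¹)) :=
        Finset.sum_le_sum h_term
    _ = M * (n + 2 * (n / √3) * ∑ j ∈ Finset.univ.erase k, |(k : ℝ) - (j : ℕ)|⁻¹) := by
        simp only [← Finset.mul_sum, Finset.sum_add_distrib, Finset.sum_const, nsmul_one,
          Finset.card_erase_of_mem (Finset.mem_univ k), Finset.card_univ, Fintype.card_fin,
          Nat.add_sub_cancel, mul_assoc]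
    _ = M * (n + 2 * (n / √3) * (harmonic k + harmonic (n - k))) := by
        rw [sum_erase_inv_abs_sub]

lemma add_mul_one_add_log_le {t : ℝ} (ht : 1 ≤ t) :
    t + 2 * (t / √3) * (2 * (1 + log t)) ≤ 3.2 + 2.3 * t + 4.3 * t * log (t + 1) := by
  have h_sqrt : t / √3 ≤ 0.58 * t := by
    have : 1 / 0.58 ≤ √3 := le_sqrt_of_sq_le (by norm_num)
    rw [div_le_iff₀ (by positivity)]
    nlinarith
  have h_log_two : 0.69 ≤ log (t + 1) :=
    le_trans (by linarith [log_two_gt_d9]) (log_le_log two_pos (by linarith))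
  have h_log : log t ≤ log (t + 1) := log_le_log (by linarith) (by linarith)
  have h_log_nonneg : 0 ≤ log t := log_nonneg ht
  grw [h_sqrt, h_log]
  nlinarith

theorem stmt_11 {n : ℕ} (hn : 1 ≤ n) (θ x xt : Fin (n + 1) → ℝ)
    (hx : ∀ k : Fin (n + 1), x k = -Real.cos ((k : ℕ) * Real.pi / n))
    (hxt : ∀ k : Fin (n + 1), xt k =
      if x k < -(1 / 2) then -1 + (x k + 1) * (1 + θ k)
      else if |x k| ≤ 1 / 2 then x k * (1 + θ k)
      else 1 + (x k - 1) * (1 + θ k))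
    (k : Fin (n + 1)) :
    ∑ j ∈ Finset.univ.erase k, |rjk x xt j k| ≤
      (Finset.univ.sup' Finset.univ_nonempty fun i => |θ i|) *
        (3.2 + 2.3 * n + 4.3 * n * Real.log (n + 1)) := by
  set M := Finset.univ.sup' Finset.univ_nonempty fun i => |θ i|
  have hθ : ∀ i, |θ i| ≤ M := fun i => Finset.le_sup' (fun i => |θ i|) (Finset.mem_univ i)
  have hM : 0 ≤ M := (abs_nonneg _).trans (hθ k)
  obtain rfl : x = fun i : Fin (n + 1) => -node n i := funext hx
  obtain rfl : xt = fun i : Fin (n + 1) => binRound (-node n i) (θ i) := funext hxt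
  have h_round : ∀ i : Fin (n + 1),
      |binRound (-node n i) (θ i) - -node n i| ≤ M * binDist (-node n i) := fun i => by
    have h_node : |-node n i| ≤ 1 := (abs_neg _).trans_le (abs_node_le_one n i)
    rw [abs_binRound_sub h_node]
    exact mul_le_mul_of_nonneg_right (hθ i) (binDist_nonneg h_node)
  calc ∑ j ∈ Finset.univ.erase k, |rjk _ _ j k|
      ≤ M * (n + 2 * (n / √3) * (harmonic k + harmonic (n - k))) :=
        sum_abs_rjk_node_le hM h_round k
    _ ≤ M * (n + 2 * (n / √3) * (2 * (1 + log n))) := by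
        grw [harmonic_add_harmonic_sub_le k.is_le]
    _ ≤ M * (3.2 + 2.3 * n + 4.3 * n * log (n + 1)) := by
        grw [add_mul_one_add_log_le (mod_cast hn)]
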